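/- The functor M ↦ S(M) from the category of filtered A-modules (with compatible exhaustive filtrations) to the category of graded S(A)-modules that are flat over K[t] is an equivalence of categories, with quasi-inverse N ↦ N ⊗_{K[t]} K[t]/(t−1), where the filtration on the target module is induced by the images of the graded pieces under multiplication by powers of t. -/

import Mathlib

/-- A filtered `A`-module: an `A`-module `M` with a monotone, exhaustive `ℤ`-indexed
filtration by `K`-submodules compatible with the filtration `FA` of `A`. -/
structure FilteredModuleOver (K A : Type) [CommRing K] [CommRing A] [Algebra K A]
    (FA : ℕ → Submodule K A) where
  M : Type
  [ab : AddCommGroup M]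
  [modA : Module A M]
  [modK : Module K M]
  [tower : IsScalarTower K A M]
  F : ℤ → Submodule K M
  mono : Monotone F
  exhaustive : ∀ x : M, ∃ n, x ∈ F n
  compat : ∀ (m : ℕ) (a : A), a ∈ FA m → ∀ (n : ℤ) (x : M), x ∈ F n → a • x ∈ F (n + m)

attribute [instance] FilteredModuleOver.ab FilteredModuleOver.modA FilteredModuleOver.modK
  FilteredModuleOver.tower

/-- A `ℤ`-graded module over the Rees algebra `S(A) = ⊕ₘ FAₘ tᵐ` which is flat over `K[t]`:
a `K`-module `N` which is the internal direct sum of graded pieces `G n`, with the action of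
the degree-one element `t` (injective, i.e. `N` is `K[t]`-torsion free, hence flat) and with
the action `mu m a _` of each homogeneous element `a tᵐ` (`a ∈ FAₘ`) of `S(A)`, subject to
the module axioms. -/
structure GradedFlatReesModule (K A : Type) [CommRing K] [CommRing A] [Algebra K A]
    (FA : ℕ → Submodule K A) where
  N : Type
  [ab : AddCommGroup N]
  [modK : Module K N]
  G : ℤ → Submodule K N
  internal : DirectSum.IsInternal G
  t : N →ₗ[K] N
  t_deg : ∀ (n : ℤ) (x : N), x ∈ G n → t x ∈ G (n + 1)
  t_inj : Function.Injective t
  mu : ∀ m : ℕ, ∀ a : A, a ∈ FA m → N →ₗ[K] N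
  mu_deg : ∀ (m : ℕ) (a : A) (ha : a ∈ FA m) (n : ℤ) (x : N), x ∈ G n →
    mu m a ha x ∈ G (n + m)
  mu_add : ∀ (m : ℕ) (a b : A) (ha : a ∈ FA m) (hb : b ∈ FA m) (hab : a + b ∈ FA m),
    mu m (a + b) hab = mu m a ha + mu m b hb
  mu_smul : ∀ (m : ℕ) (c : K) (a : A) (ha : a ∈ FA m) (h : c • a ∈ FA m),
    mu m (c • a) h = c • mu m a ha
  mu_one : ∀ h : (1 : A) ∈ FA 0, mu 0 1 h = LinearMap.id
  mu_mul : ∀ (m m' : ℕ) (a a' : A) (ha : a ∈ FA m) (ha' : a' ∈ FA m')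
    (h : a * a' ∈ FA (m + m')), mu (m + m') (a * a') h = (mu m a ha) ∘ₗ (mu m' a' ha')
  mu_t : ∀ h : (1 : A) ∈ FA 1, mu 1 1 h = t
  mu_up : ∀ (m : ℕ) (a : A) (ha : a ∈ FA m) (ha' : a ∈ FA (m + 1)),
    mu (m + 1) a ha' = t ∘ₗ mu m a ha

attribute [instance] GradedFlatReesModule.ab GradedFlatReesModule.modK

/-!
Setting `t = 1` turns a graded module `N` into `N / (t - 1) N`, filtered by the images of the graded
pieces. These images are faithful copies of the pieces: if `y ≠ 0` has lowest degree `p` and highest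
degree `q`, then `t y - y` has nonzero components in the two distinct degrees `p` and `q + 1`, so
`(t - 1) N` contains no nonzero homogeneous element. Since `a tᵐ` and `a tᵐ⁺¹` act alike on the
quotient, the actions of the `FA m` glue to an action of their union `A`. In the same way, a graded
map of Rees modules is a compatible family of maps on the steps of an exhaustive filtration, and
glues to a unique map of filtered modules.
-/

section ExhaustiveFiltration

variable {ι R M P : Type*} [Semiring R] [AddCommMonoid M] [Module R M] [AddCommMonoid P]
  [Module R P] {F : ι → Submodule R M}

theorem apply_inclusion_of_le_of_succ [PartialOrder ι] [SuccOrder ι] [IsSuccArchimedean ι]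
    (hF : Monotone F) (φ : ∀ i, F i →ₗ[R] P)
    (hφ : ∀ i (x : F i), φ (Order.succ i) (Submodule.inclusion (hF (Order.le_succ i)) x) = φ i x)
    {i j : ι} (hij : i ≤ j) (x : F i) : φ j (Submodule.inclusion (hF hij) x) = φ i x := by
  induction hij using Succ.rec with
  | rfl => rfl
  | succ k hik ih => exact (hφ k _).trans ih

variable [Preorder ι] [IsDirectedOrder ι]

theorem apply_eq_apply_of_mem (hF : Monotone F) {φ : ∀ i, F i →ₗ[R] P}
    (hφ : ∀ {i j} (hij : i ≤ j) (x : F i), φ j (Submodule.inclusion (hF hij) x) = φ i x)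
    {i j : ι} {x : M} (hi : x ∈ F i) (hj : x ∈ F j) : φ i ⟨x, hi⟩ = φ j ⟨x, hj⟩ := by
  obtain ⟨k, hik, hjk⟩ := exists_ge_ge i j
  exact (hφ hik ⟨x, hi⟩).symm.trans (hφ hjk ⟨x, hj⟩)

/-- The linear map glued from a compatible family of linear maps on the steps of an exhaustive
filtration. -/
noncomputable def liftOfExhaustive (hF : Monotone F) (hexh : ∀ x, ∃ i, x ∈ F i)
    (φ : ∀ i, F i →ₗ[R] P)
    (hφ : ∀ {i j} (hij : i ≤ j) (x : F i), φ j (Submodule.inclusion (hF hij) x) = φ i x) :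
    M →ₗ[R] P where
  toFun x := φ (hexh x).choose ⟨x, (hexh x).choose_spec⟩
  map_add' x y := by
    obtain ⟨i, hx⟩ := hexh x
    obtain ⟨j, hy⟩ := hexh y
    obtain ⟨k, hik, hjk⟩ := exists_ge_ge i j
    rw [apply_eq_apply_of_mem hF hφ _ (add_mem (hF hik hx) (hF hjk hy)),
      apply_eq_apply_of_mem hF hφ _ (hF hik hx), apply_eq_apply_of_mem hF hφ _ (hF hjk hy),
      ← map_add, AddMemClass.mk_add_mk]
  map_smul' r x := by
    obtain ⟨i, hx⟩ := hexh x
    rw [apply_eq_apply_of_mem hF hφ _ ((F i).smul_mem r hx), apply_eq_apply_of_mem hF hφ _ hx,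
      RingHom.id_apply, ← map_smul, SetLike.mk_smul_mk]

theorem liftOfExhaustive_apply (hF : Monotone F) (hexh : ∀ x, ∃ i, x ∈ F i)
    (φ : ∀ i, F i →ₗ[R] P)
    (hφ : ∀ {i j} (hij : i ≤ j) (x : F i), φ j (Submodule.inclusion (hF hij) x) = φ i x)
    {i : ι} {x : M} (hx : x ∈ F i) : liftOfExhaustive hF hexh φ hφ x = φ i ⟨x, hx⟩ :=
  apply_eq_apply_of_mem hF hφ _ hx

end ExhaustiveFiltration

section ShiftedGrading

open DirectSum

theorem coe_decompose_map_add {ι M σ : Type*} [DecidableEq ι] [Add ι] [IsRightCancelAdd ι]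
    [AddCommMonoid M] [SetLike σ M] [AddSubmonoidClass σ M] (ℳ : ι → σ) [Decomposition ℳ]
    {d : ι} {f : M →+ M} (hf : ∀ i, ∀ x ∈ ℳ i, f x ∈ ℳ (i + d)) (y : M) (i : ι) :
    (decompose ℳ (f y) (i + d) : M) = f (decompose ℳ y i) := by
  induction y using Decomposition.inductionOn ℳ with
  | zero => simp only [map_zero, decompose_zero, DirectSum.zero_apply, ZeroMemClass.coe_zero]
  | @homogeneous j z =>
    rcases eq_or_ne j i with rfl | hji
    · rw [decompose_of_mem_same ℳ (hf j z z.2), decompose_of_mem_same ℳ z.2]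
    · rw [decompose_of_mem_ne ℳ (hf j z z.2) (add_left_injective d |>.ne hji),
        decompose_of_mem_ne ℳ z.2 hji, map_zero]
  | add u v hu hv =>
    simp only [map_add, decompose_add, DirectSum.add_apply, AddMemClass.coe_add, hu, hv]

theorem disjoint_range_sub_id {ι R M : Type*} [AddCommGroup ι] [LinearOrder ι]
    [IsOrderedAddMonoid ι] [Ring R] [AddCommGroup M] [Module R M] (ℳ : ι → Submodule R M)
    [Decomposition ℳ] {d : ι} (hd : 0 < d) {f : M →ₗ[R] M}
    (hf : ∀ i, ∀ x ∈ ℳ i, f x ∈ ℳ (i + d)) (hinj : Function.Injective f) (n : ι) :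
    Disjoint (ℳ n) (LinearMap.range (f - LinearMap.id)) := by
  classical
  rw [Submodule.disjoint_def]
  rintro _ hn ⟨y, rfl⟩
  by_contra hne
  have hs : (decompose ℳ y).support.Nonempty := by
    refine Finset.nonempty_iff_ne_empty.2 fun hempty => hne ?_
    rw [DFinsupp.support_eq_empty, ← decompose_zero ℳ, (decompose ℳ).injective.eq_iff] at hempty
    rw [hempty, map_zero]
  set p := (decompose ℳ y).support.min' hs
  set q := (decompose ℳ y).support.max' hs
  have hpq : p < q + d := (Finset.min'_le_max' _ hs).trans_lt (lt_add_of_pos_right q hd)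
  have hcoeff (i : ι) : (decompose ℳ ((f - (LinearMap.id : M →ₗ[R] M)) y) (i + d) : M) =
      f (decompose ℳ y i) - decompose ℳ y (i + d) := by
    rw [LinearMap.sub_apply, LinearMap.id_apply, decompose_sub, DirectSum.sub_apply,
      AddSubgroupClass.coe_sub]
    exact congrArg (· - _) (coe_decompose_map_add ℳ (f := f.toAddMonoidHom) hf y i)
  have hzero {i : ι} (hi : i < p ∨ q < i) : decompose ℳ y i = 0 :=
    DFinsupp.notMem_support_iff.1 fun hmem => hi.elim
      (Finset.min'_le _ i hmem).not_gt (Finset.le_max' _ i hmem).not_gt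
  have hp : n = p := by
    by_contra hnp
    have h := hcoeff (p - d)
    rw [hzero (.inl (sub_lt_self p hd)), sub_add_cancel, decompose_of_mem_ne ℳ hn hnp,
      ZeroMemClass.coe_zero, map_zero, zero_sub, zero_eq_neg, ZeroMemClass.coe_eq_zero] at h
    exact DFinsupp.mem_support_iff.1 (Finset.min'_mem _ hs) h
  have hq : n = q + d := by
    by_contra hnq
    have h := hcoeff q
    rw [hzero (.inr (lt_add_of_pos_right q hd)), decompose_of_mem_ne ℳ hn hnq,
      ZeroMemClass.coe_zero, sub_zero, eq_comm, map_eq_zero_iff f hinj,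
      ZeroMemClass.coe_eq_zero] at h
    exact DFinsupp.mem_support_iff.1 (Finset.max'_mem _ hs) h
  exact hpq.ne (hp.symm.trans hq)

end ShiftedGrading

namespace FilteredModuleOver

variable {K A : Type} [CommRing K] [CommRing A] [Algebra K A] {FA : ℕ → Submodule K A}

/-- A graded `S(A)`-linear map `S(X₁) → S(X₂)`, given by its homogeneous components: the degree-`n`
piece of `S(X)` is `X.F n`, and `t` acts on it as the inclusion `X.F n ⊆ X.F (n + 1)`. -/
structure ReesHom (X₁ X₂ : FilteredModuleOver K A FA) where
  component : ∀ n : ℤ, X₁.F n →ₗ[K] X₂.F n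
  component_t : ∀ (n : ℤ) (x : X₁.M) (hx : x ∈ X₁.F n),
    (component (n + 1) ⟨x, X₁.mono (Order.le_succ n) hx⟩ : X₂.M) = component n ⟨x, hx⟩
  component_smul : ∀ (m : ℕ) (a : A) (ha : a ∈ FA m) (n : ℤ) (x : X₁.M) (hx : x ∈ X₁.F n),
    (component (n + m) ⟨a • x, X₁.compat m a ha n x hx⟩ : X₂.M) = a • (component n ⟨x, hx⟩ : X₂.M)

theorem ReesHom.existsUnique_linearMap {X₁ X₂ : FilteredModuleOver K A FA} (φ : ReesHom X₁ X₂)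
    (hexh : ∀ a : A, ∃ m, a ∈ FA m) :
    ∃! f : X₁.M →ₗ[A] X₂.M,
      ∀ (n : ℤ) (x : X₁.M) (hx : x ∈ X₁.F n), f x = φ.component n ⟨x, hx⟩ := by
  let ψ (n : ℤ) : X₁.F n →ₗ[K] X₂.M := (X₂.F n).subtype ∘ₗ φ.component n
  let f : X₁.M →ₗ[K] X₂.M := liftOfExhaustive X₁.mono X₁.exhaustive ψ
    (apply_inclusion_of_le_of_succ X₁.mono ψ fun n x => φ.component_t n x x.2)
  have hf (n : ℤ) (x : X₁.M) (hx : x ∈ X₁.F n) : f x = φ.component n ⟨x, hx⟩ :=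
    liftOfExhaustive_apply X₁.mono X₁.exhaustive _ _ hx
  have hsmul (a : A) (x : X₁.M) : f (a • x) = a • f x := by
    obtain ⟨m, ha⟩ := hexh a
    obtain ⟨n, hx⟩ := X₁.exhaustive x
    rw [hf _ _ (X₁.compat m a ha n x hx), φ.component_smul m a ha, hf n x hx]
  refine ⟨{ f with map_smul' := hsmul }, hf, fun g hg => LinearMap.ext fun x => ?_⟩
  obtain ⟨n, hx⟩ := X₁.exhaustive x
  exact (hg n x hx).trans (hf n x hx).symm

end FilteredModuleOver

namespace GradedFlatReesModule

variable {K A : Type} [CommRing K] [CommRing A] [Algebra K A] {FA : ℕ → Submodule K A}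
  (Y : GradedFlatReesModule K A FA)

theorem mu_t_comm [SetLike.GradedMonoid FA] (hmono : Monotone FA) {m : ℕ} {a : A} (ha : a ∈ FA m)
    (y : Y.N) : Y.mu m a ha (Y.t y) = Y.t (Y.mu m a ha y) := by
  have h1 : (1 : A) ∈ FA 1 := hmono zero_le_one SetLike.GradedOne.one_mem
  have hmul := Y.mu_mul m 1 a 1 ha h1 (SetLike.GradedMul.mul_mem ha h1)
  simp only [mul_one, Y.mu_t, Y.mu_up m a ha] at hmul
  exact (LinearMap.congr_fun hmul y).symm

/-- The submodule `(t - 1) N`. -/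
def relations : Submodule K Y.N :=
  LinearMap.range (Y.t - LinearMap.id)

/-- The specialization of `N` at `t = 1`: the module `N ⊗_{K[t]} K[t]/(t - 1)`, realized as
`N / (t - 1) N`. -/
abbrev Specialization : Type :=
  Y.N ⧸ Y.relations

theorem mkQ_t (y : Y.N) : Y.relations.mkQ (Y.t y) = Y.relations.mkQ y :=
  (Submodule.Quotient.eq _).2 ⟨y, rfl⟩

theorem disjoint_relations (n : ℤ) : Disjoint (Y.G n) Y.relations :=
  letI := Y.internal.chooseDecomposition
  disjoint_range_sub_id Y.G zero_lt_one Y.t_deg Y.t_inj n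

/-- The filtration of `N / (t - 1) N` by the images of the graded pieces of `N`. -/
def filtration (n : ℤ) : Submodule K Y.Specialization :=
  (Y.G n).map Y.relations.mkQ

theorem filtration_mono : Monotone Y.filtration := by
  refine monotone_int_of_le_succ fun n => ?_
  rintro _ ⟨x, hx, rfl⟩
  exact ⟨Y.t x, Y.t_deg n x hx, Y.mkQ_t x⟩

theorem exists_mem_filtration (x : Y.Specialization) : ∃ n, x ∈ Y.filtration n := by
  have htop : ⨆ n, Y.filtration n = ⊤ := by
    simp only [filtration, ← Submodule.map_iSup, Y.internal.submodule_iSup_eq_top,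
      Submodule.map_top, Submodule.range_mkQ]
  rw [← Submodule.mem_iSup_of_directed _ Y.filtration_mono.directed_le, htop]
  exact Submodule.mem_top

/-- The graded pieces of `N` are the steps of the filtration of `N / (t - 1) N`. -/
noncomputable def gradedPieceEquiv (n : ℤ) : Y.G n ≃ₗ[K] Y.filtration n :=
  LinearEquiv.ofBijective (Y.relations.mkQ.submoduleMap (Y.G n))
    ⟨(injective_iff_map_eq_zero _).2 fun x hx => Subtype.ext <|
        Submodule.disjoint_def.1 (Y.disjoint_relations n) x x.2 <|
          (Submodule.Quotient.mk_eq_zero _).1 (congrArg Subtype.val hx),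
      LinearMap.submoduleMap_surjective _ _⟩

/-- The action of the degree-`m` piece `FA m tᵐ` of `S(A)` on `N`. -/
def muLinear (m : ℕ) : FA m →ₗ[K] Module.End K Y.N where
  toFun a := Y.mu m a a.2
  map_add' a b := Y.mu_add m a b a.2 b.2 (a + b).2
  map_smul' c a := Y.mu_smul m c a a.2 (c • a).2

/-- The map sending `a ∈ FA m` and `y` to the class of `(a tᵐ) y` in `N / (t - 1) N`. -/
def mkQMuPiece (m : ℕ) : FA m →ₗ[K] Y.N →ₗ[K] Y.Specialization :=
  Y.relations.mkQ.compRight K ∘ₗ Y.muLinear m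

theorem mkQMuPiece_succ (hmono : Monotone FA) (m : ℕ) (a : FA m) :
    Y.mkQMuPiece (m + 1) (Submodule.inclusion (hmono m.le_succ) a) = Y.mkQMuPiece m a :=
  LinearMap.ext fun y =>
    (congrArg Y.relations.mkQ (LinearMap.congr_fun (Y.mu_up m a a.2 _) y)).trans (Y.mkQ_t _)

theorem mkQMuPiece_inclusion (hmono : Monotone FA) {m n : ℕ} (hmn : m ≤ n) (a : FA m) :
    Y.mkQMuPiece n (Submodule.inclusion (hmono hmn) a) = Y.mkQMuPiece m a :=
  apply_inclusion_of_le_of_succ hmono Y.mkQMuPiece (Y.mkQMuPiece_succ hmono) hmn a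

section Action

variable (hmono : Monotone FA) (hexh : ∀ a : A, ∃ m, a ∈ FA m)

/-- The `K`-bilinear map `A × N → N / (t - 1) N` glued from the maps `mkQMuPiece m`. -/
noncomputable def mkQMu : A →ₗ[K] Y.N →ₗ[K] Y.Specialization :=
  liftOfExhaustive hmono hexh Y.mkQMuPiece (Y.mkQMuPiece_inclusion hmono)

theorem mkQMu_apply {m : ℕ} {a : A} (ha : a ∈ FA m) (y : Y.N) :
    Y.mkQMu hmono hexh a y = Y.relations.mkQ (Y.mu m a ha y) :=
  LinearMap.congr_fun (liftOfExhaustive_apply hmono hexh Y.mkQMuPiece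
    (Y.mkQMuPiece_inclusion hmono) ha) y

variable [SetLike.GradedMonoid FA]

theorem mkQMu_t (a : A) (y : Y.N) : Y.mkQMu hmono hexh a (Y.t y) = Y.mkQMu hmono hexh a y := by
  obtain ⟨m, ha⟩ := hexh a
  rw [mkQMu_apply _ _ _ ha, mkQMu_apply _ _ _ ha, Y.mu_t_comm hmono, mkQ_t]

theorem relations_le_ker_flip_mkQMu :
    Y.relations ≤ LinearMap.ker (Y.mkQMu hmono hexh).flip := by
  rintro _ ⟨y, rfl⟩
  ext a
  simp [mkQMu_t]

/-- The `K`-linear action of `A` on `N / (t - 1) N`, with `a ∈ FA m` acting as `a tᵐ`. -/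
noncomputable def actionLinear : A →ₗ[K] Module.End K Y.Specialization :=
  (Y.relations.liftQ _ (Y.relations_le_ker_flip_mkQMu hmono hexh)).flip

theorem actionLinear_mkQ {m : ℕ} {a : A} (ha : a ∈ FA m) (y : Y.N) :
    Y.actionLinear hmono hexh a (Y.relations.mkQ y) = Y.relations.mkQ (Y.mu m a ha y) :=
  Y.mkQMu_apply hmono hexh ha y

/-- The action of `A` on `N / (t - 1) N` as a homomorphism of `K`-algebras. -/
noncomputable def action : A →ₐ[K] Module.End K Y.Specialization :=
  AlgHom.ofLinearMap (Y.actionLinear hmono hexh)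
    (Submodule.linearMap_qext _ <| LinearMap.ext fun y => by
      have h1 : (1 : A) ∈ FA 0 := SetLike.GradedOne.one_mem
      rw [LinearMap.comp_apply, Y.actionLinear_mkQ hmono hexh h1, Y.mu_one h1]
      rfl)
    fun a b => Submodule.linearMap_qext _ <| LinearMap.ext fun y => by
      obtain ⟨m, ha⟩ := hexh a
      obtain ⟨n, hb⟩ := hexh b
      have hab : a * b ∈ FA (m + n) := SetLike.GradedMul.mul_mem ha hb
      rw [LinearMap.comp_apply, LinearMap.comp_apply, Module.End.mul_apply,
        Y.actionLinear_mkQ hmono hexh hab, Y.actionLinear_mkQ hmono hexh hb,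
        Y.actionLinear_mkQ hmono hexh ha, Y.mu_mul m n a b ha hb hab, LinearMap.comp_apply]

theorem action_mkQ {m : ℕ} {a : A} (ha : a ∈ FA m) (y : Y.N) :
    Y.action hmono hexh a (Y.relations.mkQ y) = Y.relations.mkQ (Y.mu m a ha y) :=
  Y.actionLinear_mkQ hmono hexh ha y

/-- The filtered `A`-module `N / (t - 1) N`, the value at `N` of the quasi-inverse of the Rees
functor. -/
noncomputable abbrev toFilteredModule : FilteredModuleOver K A FA :=
  letI : Module A Y.Specialization := Module.compHom _ (Y.action hmono hexh).toRingHom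
  { M := Y.Specialization
    tower := ⟨fun c a x => LinearMap.congr_fun (map_smul (Y.action hmono hexh) c a) x⟩
    F := Y.filtration
    mono := Y.filtration_mono
    exhaustive := Y.exists_mem_filtration
    compat := by
      rintro m a ha n _ ⟨y, hy, rfl⟩
      exact ⟨Y.mu m a ha y, Y.mu_deg m a ha n y hy, (Y.action_mkQ hmono hexh ha y).symm⟩ }

end Action

/-- An isomorphism of graded `S(A)`-modules `N ≃ S(X)`, given by its homogeneous components. -/
structure ReesEquiv (X : FilteredModuleOver K A FA) where
  component : ∀ n : ℤ, Y.G n ≃ₗ[K] X.F n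
  component_t : ∀ (n : ℤ) (x : Y.N) (hx : x ∈ Y.G n),
    (component (n + 1) ⟨Y.t x, Y.t_deg n x hx⟩ : X.M) = component n ⟨x, hx⟩
  component_mu : ∀ (m : ℕ) (a : A) (ha : a ∈ FA m) (n : ℤ) (x : Y.N) (hx : x ∈ Y.G n),
    (component (n + m) ⟨Y.mu m a ha x, Y.mu_deg m a ha n x hx⟩ : X.M) =
      a • (component n ⟨x, hx⟩ : X.M)

/-- The isomorphism `N ≃ S(N / (t - 1) N)`. -/
noncomputable def reesEquiv [SetLike.GradedMonoid FA] (hmono : Monotone FA)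
    (hexh : ∀ a : A, ∃ m, a ∈ FA m) : Y.ReesEquiv (Y.toFilteredModule hmono hexh) where
  component := Y.gradedPieceEquiv
  component_t _ x _ := Y.mkQ_t x
  component_mu _ _ ha _ x _ := (Y.action_mkQ hmono hexh ha x).symm

end GradedFlatReesModule

theorem rees_functor_equivalence_general {K A : Type} [CommRing K] [CommRing A] [Algebra K A]
    {FA : ℕ → Submodule K A} [SetLike.GradedMonoid FA] (hmono : Monotone FA)
    (hexh : ∀ a : A, ∃ m, a ∈ FA m) :
    (∀ Y : GradedFlatReesModule K A FA, Nonempty (Y.ReesEquiv (Y.toFilteredModule hmono hexh))) ∧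
    ∀ (X₁ X₂ : FilteredModuleOver K A FA) (φ : X₁.ReesHom X₂),
      ∃! f : X₁.M →ₗ[A] X₂.M,
        ∀ (n : ℤ) (x : X₁.M) (hx : x ∈ X₁.F n), f x = φ.component n ⟨x, hx⟩ :=
  ⟨fun Y => ⟨Y.reesEquiv hmono hexh⟩, fun _ _ φ => φ.existsUnique_linearMap hexh⟩

/-- The Rees functor `M ↦ S(M)` from filtered `A`-modules (with compatible exhaustive
filtrations) to graded `S(A)`-modules flat over `K[t]` is an equivalence of categories,
with quasi-inverse `N ↦ N ⊗_{K[t]} K[t]/(t-1)`: it is essentially surjective (every graded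
flat `S(A)`-module is, degreewise, the Rees module of a filtered module — the degree-`n`
piece being `F n`, with `t` acting as the inclusions `F n ⊆ F (n+1)` and `a tᵐ` acting by
`a • ·`), and fully faithful (graded maps of Rees modules correspond bijectively to
filtration-preserving `A`-linear maps). -/
theorem rees_functor_equivalence
    (K A : Type) [Field K] [CommRing A] [Algebra K A]
    (FA : ℕ → Submodule K A) (hmonoA : Monotone FA) (h1 : (1 : A) ∈ FA 0)
    (hK : ∀ c : K, algebraMap K A c ∈ FA 0)
    (hmulA : ∀ m n : ℕ, ∀ a ∈ FA m, ∀ b ∈ FA n, a * b ∈ FA (m + n))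
    (hexhA : ∀ a : A, ∃ n, a ∈ FA n) :
    -- essential surjectivity of the Rees functor `S(·)`
    (∀ Y : GradedFlatReesModule K A FA, ∃ X : FilteredModuleOver K A FA,
      ∃ e : ∀ n : ℤ, (Y.G n) ≃ₗ[K] (X.F n),
        (∀ (n : ℤ) (x : Y.N) (hx : x ∈ Y.G n),
          ((e (n + 1) ⟨Y.t x, Y.t_deg n x hx⟩ : X.F (n + 1)) : X.M)
            = ((e n ⟨x, hx⟩ : X.F n) : X.M)) ∧
        (∀ (m : ℕ) (a : A) (ha : a ∈ FA m) (n : ℤ) (x : Y.N) (hx : x ∈ Y.G n),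
          ((e (n + m) ⟨Y.mu m a ha x, Y.mu_deg m a ha n x hx⟩ : X.F (n + m)) : X.M)
            = a • ((e n ⟨x, hx⟩ : X.F n) : X.M))) ∧
    -- full faithfulness of the Rees functor `S(·)`
    (∀ X₁ X₂ : FilteredModuleOver K A FA,
      ∀ φ : ∀ n : ℤ, (X₁.F n) →ₗ[K] (X₂.F n),
        (∀ (n : ℤ) (x : X₁.M) (hx : x ∈ X₁.F n),
          ((φ (n + 1) ⟨x, X₁.mono (by omega) hx⟩ : X₂.F (n + 1)) : X₂.M)
            = ((φ n ⟨x, hx⟩ : X₂.F n) : X₂.M)) →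
        (∀ (m : ℕ) (a : A) (ha : a ∈ FA m) (n : ℤ) (x : X₁.M) (hx : x ∈ X₁.F n),
          ((φ (n + m) ⟨a • x, X₁.compat m a ha n x hx⟩ : X₂.F (n + m)) : X₂.M)
            = a • ((φ n ⟨x, hx⟩ : X₂.F n) : X₂.M)) →
        ∃! f : X₁.M →ₗ[A] X₂.M,
          ∀ (n : ℤ) (x : X₁.M) (hx : x ∈ X₁.F n),
            f x = ((φ n ⟨x, hx⟩ : X₂.F n) : X₂.M)) := by
  have : SetLike.GradedMonoid FA :=
    { one_mem := h1, mul_mem := fun m n a b ha hb => hmulA m n a ha b hb }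
  obtain ⟨hsurj, hff⟩ := rees_functor_equivalence_general hmonoA hexhA
  refine ⟨fun Y => ?_, fun X₁ X₂ φ ht hsmul => hff X₁ X₂ ⟨φ, ht, hsmul⟩⟩
  obtain ⟨e⟩ := hsurj Y
  exact ⟨_, e.component, e.component_t, e.component_mu⟩
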